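/- For any graph G, γ(G)/2 ≤ ir(G) ≤ γ(G) ≤ 2·ir(G) − 1. -/

import Mathlib

variable {V : Type*} [Fintype V] [DecidableEq V]

/-- `S` is a dominating set of `G`: every vertex outside `S` has a neighbor in `S`. -/
def IsDomSet (G : SimpleGraph V) (S : Finset V) : Prop :=
  ∀ v : V, v ∉ S → ∃ u ∈ S, G.Adj u v

/-- The domination number: minimum cardinality of a dominating set. -/
noncomputable def domNum (G : SimpleGraph V) : ℕ :=
  sInf {n | ∃ S : Finset V, IsDomSet G S ∧ S.card = n}

/-- `v` has a private neighbor with respect to `S`: some vertex of the closed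
neighborhood of `v` lies outside the closed neighborhood of `S \ {v}`. -/
def HasPrivateNbr (G : SimpleGraph V) (S : Finset V) (v : V) : Prop :=
  ∃ w : V, (w = v ∨ G.Adj v w) ∧ ∀ u ∈ S, u ≠ v → ¬ (w = u ∨ G.Adj u w)

/-- `S` is irredundant: every vertex of `S` has a private neighbor. -/
def IsIrredundant (G : SimpleGraph V) (S : Finset V) : Prop :=
  ∀ v ∈ S, HasPrivateNbr G S v

/-- `S` is a maximal irredundant set of `G`. -/
def IsMaximalIrredundant (G : SimpleGraph V) (S : Finset V) : Prop :=
  IsIrredundant G S ∧ ∀ T : Finset V, S ⊂ T → ¬ IsIrredundant G T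

/-- The irredundance number: minimum cardinality of a maximal irredundant set. -/
noncomputable def irNum (G : SimpleGraph V) : ℕ :=
  sInf {n | ∃ S : Finset V, IsMaximalIrredundant G S ∧ S.card = n}

/-- The upper irredundance number: maximum cardinality of a maximal irredundant set. -/
noncomputable def upperIrNum (G : SimpleGraph V) : ℕ :=
  sSup {n | ∃ S : Finset V, IsMaximalIrredundant G S ∧ S.card = n}

/-- `S` is an independent set of `G`. -/
def IsIndepSet (G : SimpleGraph V) (S : Finset V) : Prop :=
  ∀ u ∈ S, ∀ v ∈ S, ¬ G.Adj u v

/-- `S` is a maximal independent set of `G`. -/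
def IsMaximalIndepSet (G : SimpleGraph V) (S : Finset V) : Prop :=
  IsIndepSet G S ∧ ∀ T : Finset V, S ⊂ T → ¬ IsIndepSet G T

/-- The independent domination number: minimum cardinality of a maximal independent set. -/
noncomputable def indepDomNum (G : SimpleGraph V) : ℕ :=
  sInf {n | ∃ S : Finset V, IsMaximalIndepSet G S ∧ S.card = n}

/-- The independence number: maximum cardinality of an independent set. -/
noncomputable def indepNum (G : SimpleGraph V) : ℕ :=
  sSup {n | ∃ S : Finset V, IsIndepSet G S ∧ S.card = n}

/-- `S` is a minimal dominating set of `G`. -/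
def IsMinimalDomSet (G : SimpleGraph V) (S : Finset V) : Prop :=
  IsDomSet G S ∧ ∀ T : Finset V, T ⊂ S → ¬ IsDomSet G T

/-- The upper domination number: maximum cardinality of a minimal dominating set. -/
noncomputable def upperDomNum (G : SimpleGraph V) : ℕ :=
  sSup {n | ∃ S : Finset V, IsMinimalDomSet G S ∧ S.card = n}

/-!
A dominating set `T` stays dominating when `v` is removed exactly when `v` has no private neighbor
in `T`. Hence a minimum dominating set is irredundant, and it is maximal irredundant because a
vertex outside it has no private neighbor in any larger set; so `ir ≤ γ`.

Conversely, let `S` be a maximal irredundant set and add to it one private neighbor of each of its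
vertices. The resulting set `T` is dominating: a vertex `w` it misses would be its own private
neighbor in `S ∪ {w}` without destroying the chosen private neighbors of `S`, against maximality.
This gives `γ ≤ 2 ir`. Finally, unless `S` itself is dominating, `T` is strictly larger than `S`,
hence not irredundant, so one of its vertices can be removed: `γ ≤ 2 ir - 1`.
-/

variable {α : Type*} {G : SimpleGraph α} {S T D : Finset α} {v w x : α}

/-- `x` is a private neighbor of `v` with respect to `S`, i.e. `x ∈ N[v] \ N[S \ {v}]`; this is the
relation whose existential closure over `x` is `HasPrivateNbr G S v`. As there, `v` need not lie
in `S`, and `x = v` is allowed. -/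
def IsPrivateNbr (G : SimpleGraph α) (S : Finset α) (v x : α) : Prop :=
  (x = v ∨ G.Adj v x) ∧ ∀ u ∈ S, u ≠ v → ¬ (x = u ∨ G.Adj u x)

theorem isDomSet_iff : IsDomSet G S ↔ ∀ x, ∃ u ∈ S, x = u ∨ G.Adj u x := by
  refine forall_congr' fun x ↦ ⟨fun hS ↦ ?_, fun ⟨u, hu, hux⟩ hx ↦ ?_⟩
  · by_cases hx : x ∈ S
    · exact ⟨x, hx, .inl rfl⟩
    · obtain ⟨u, hu, hux⟩ := hS hx
      exact ⟨u, hu, .inr hux⟩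
  · exact ⟨u, hu, hux.resolve_left fun hxu ↦ hx (hxu ▸ hu)⟩

theorem IsDomSet.mono (hS : IsDomSet G S) (hST : S ⊆ T) : IsDomSet G T := by
  intro v hv
  obtain ⟨u, hu, huv⟩ := hS v fun hvS ↦ hv (hST hvS)
  exact ⟨u, hST hu, huv⟩

theorem IsDomSet.isDomSet_erase_iff [DecidableEq α] (hT : IsDomSet G T) :
    IsDomSet G (T.erase v) ↔ ¬ HasPrivateNbr G T v := by
  rw [isDomSet_iff] at hT ⊢
  constructor
  · rintro hdom ⟨x, -, hx⟩
    obtain ⟨u, hu, hux⟩ := hdom x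
    exact hx u (Finset.mem_of_mem_erase hu) (Finset.ne_of_mem_erase hu) hux
  · intro hv x
    by_contra! hx
    have hxT : ∀ u ∈ T, u ≠ v → ¬ (x = u ∨ G.Adj u x) := fun u hu huv ↦
      not_or.2 (hx u (Finset.mem_erase.2 ⟨huv, hu⟩))
    obtain ⟨u, hu, hux⟩ := hT x
    obtain rfl : u = v := by_contra fun huv ↦ hxT u hu huv hux
    exact hv ⟨x, hux, hxT⟩

theorem IsMinimalDomSet.isIrredundant (hD : IsMinimalDomSet G D) : IsIrredundant G D := by
  classical
  intro v hv
  by_contra hpriv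
  exact hD.2 _ (Finset.erase_ssubset hv) (hD.1.isDomSet_erase_iff.2 hpriv)

theorem IsDomSet.not_isIrredundant_of_ssubset (hD : IsDomSet G D) (hDT : D ⊂ T) :
    ¬ IsIrredundant G T := by
  classical
  obtain ⟨v, hvT, hvD⟩ := Finset.exists_of_ssubset hDT
  have herase : IsDomSet G (T.erase v) := hD.mono (Finset.subset_erase.2 ⟨hDT.subset, hvD⟩)
  exact fun hT ↦ (hD.mono hDT.subset).isDomSet_erase_iff.1 herase (hT v hvT)

theorem IsMinimalDomSet.isMaximalIrredundant (hD : IsMinimalDomSet G D) :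
    IsMaximalIrredundant G D :=
  ⟨hD.isIrredundant, fun _ hDT ↦ hD.1.not_isIrredundant_of_ssubset hDT⟩

theorem IsPrivateNbr.insert [DecidableEq α] (hx : IsPrivateNbr G S v x)
    (hwx : ¬ (x = w ∨ G.Adj w x)) : IsPrivateNbr G (insert w S) v x := by
  refine ⟨hx.1, fun u hu huv ↦ ?_⟩
  obtain rfl | hu := Finset.mem_insert.1 hu
  · exact hwx
  · exact hx.2 u hu huv

theorem isPrivateNbr_insert_self [DecidableEq α] (hw : ∀ u ∈ S, ¬ G.Adj u w) :
    IsPrivateNbr G (insert w S) w w :=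
  ⟨.inl rfl, fun u hu huw ↦ not_or.2 ⟨huw.symm, hw u (Finset.mem_of_mem_insert_of_ne hu huw)⟩⟩

theorem IsMaximalIrredundant.isDomSet_union_image [DecidableEq α] (hS : IsMaximalIrredundant G S)
    {p : α → α} (hp : ∀ v ∈ S, IsPrivateNbr G S v (p v)) : IsDomSet G (S ∪ S.image p) := by
  intro w hw
  by_contra! hadj
  obtain ⟨hwS, hwp⟩ : w ∉ S ∧ w ∉ S.image p := by simpa only [Finset.mem_union, not_or] using hw
  refine hS.2 (insert w S) (Finset.ssubset_insert hwS) fun v hv ↦ ?_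
  obtain rfl | hv := Finset.mem_insert.1 hv
  · exact ⟨v, isPrivateNbr_insert_self fun u hu ↦ hadj u (Finset.mem_union_left _ hu)⟩
  · have hpv : p v ∈ S.image p := Finset.mem_image_of_mem p hv
    have hne : p v ≠ w := ne_of_mem_of_not_mem hpv hwp
    have hnadj : ¬ G.Adj w (p v) := fun h ↦ hadj _ (Finset.mem_union_right _ hpv) h.symm
    exact ⟨p v, (hp v hv).insert (not_or.2 ⟨hne, hnadj⟩)⟩

theorem IsMaximalIrredundant.exists_superset_isDomSet (hS : IsMaximalIrredundant G S) :
    ∃ T, S ⊆ T ∧ IsDomSet G T ∧ T.card ≤ 2 * S.card := by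
  classical
  choose! p hp using (hS.1 : ∀ v ∈ S, ∃ x, IsPrivateNbr G S v x)
  refine ⟨S ∪ S.image p, Finset.subset_union_left, hS.isDomSet_union_image hp, ?_⟩
  calc (S ∪ S.image p).card ≤ S.card + (S.image p).card := Finset.card_union_le _ _
    _ ≤ S.card + S.card := Nat.add_le_add_left Finset.card_image_le _
    _ = 2 * S.card := (two_mul _).symm

theorem IsMaximalIrredundant.exists_isDomSet_card_le (hS : IsMaximalIrredundant G S) :
    ∃ D, IsDomSet G D ∧ D.card ≤ 2 * S.card - 1 := by
  classical
  obtain ⟨T, hST, hT, hcard⟩ := hS.exists_superset_isDomSet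
  obtain rfl | hssubset := hST.eq_or_ssubset
  · exact ⟨S, hT, by omega⟩
  · have hred : ¬ IsIrredundant G T := hS.2 T hssubset
    obtain ⟨v, hv, hpriv⟩ : ∃ v ∈ T, ¬ HasPrivateNbr G T v := by
      simpa only [IsIrredundant, not_forall, exists_prop] using hred
    refine ⟨T.erase v, hT.isDomSet_erase_iff.2 hpriv, ?_⟩
    rw [Finset.card_erase_of_mem hv]
    exact Nat.sub_le_sub_right hcard 1

theorem domNum_le_card (hD : IsDomSet G D) : domNum G ≤ D.card :=
  Nat.sInf_le ⟨D, hD, rfl⟩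

theorem irNum_le_card (hS : IsMaximalIrredundant G S) : irNum G ≤ S.card :=
  Nat.sInf_le ⟨S, hS, rfl⟩

theorem exists_isMinimalDomSet_card_eq_domNum (hG : ∃ D : Finset α, IsDomSet G D) :
    ∃ D, IsMinimalDomSet G D ∧ D.card = domNum G := by
  obtain ⟨D₀, hD₀⟩ := hG
  have hne : {n | ∃ D : Finset α, IsDomSet G D ∧ D.card = n}.Nonempty := ⟨_, D₀, hD₀, rfl⟩
  obtain ⟨D, hD, hcard⟩ : ∃ D, IsDomSet G D ∧ D.card = domNum G := Nat.sInf_mem hne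
  refine ⟨D, ⟨hD, fun T hTD hT ↦ ?_⟩, hcard⟩
  exact (Finset.card_lt_card hTD).not_ge (hcard ▸ domNum_le_card hT)

theorem exists_isMaximalIrredundant_card_eq_irNum (hG : ∃ S, IsMaximalIrredundant G S) :
    ∃ S, IsMaximalIrredundant G S ∧ S.card = irNum G := by
  obtain ⟨S₀, hS₀⟩ := hG
  have hne : {n | ∃ S : Finset α, IsMaximalIrredundant G S ∧ S.card = n}.Nonempty :=
    ⟨_, S₀, hS₀, rfl⟩
  exact Nat.sInf_mem hne

theorem domNum_irNum_bounds_general (G : SimpleGraph α) (hG : ∃ D : Finset α, IsDomSet G D) :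
    domNum G ≤ 2 * irNum G ∧ irNum G ≤ domNum G ∧ domNum G ≤ 2 * irNum G - 1 := by
  obtain ⟨D, hD, hDcard⟩ := exists_isMinimalDomSet_card_eq_domNum hG
  have hDir : IsMaximalIrredundant G D := hD.isMaximalIrredundant
  obtain ⟨S, hS, hScard⟩ := exists_isMaximalIrredundant_card_eq_irNum ⟨D, hDir⟩
  obtain ⟨T, hT, hTcard⟩ := hS.exists_isDomSet_card_le
  have hir : irNum G ≤ domNum G := hDcard ▸ irNum_le_card hDir
  have hdom : domNum G ≤ 2 * irNum G - 1 := hScard ▸ (domNum_le_card hT).trans hTcard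
  exact ⟨hdom.trans (Nat.sub_le _ _), hir, hdom⟩

/-- For any graph `G` (with no isolated vertices),
`γ(G)/2 ≤ ir(G) ≤ γ(G) ≤ 2·ir(G) − 1`. -/
theorem domNum_irNum_bounds (G : SimpleGraph V) (h : ∀ v : V, ∃ u : V, G.Adj v u) :
    domNum G ≤ 2 * irNum G ∧ irNum G ≤ domNum G ∧ domNum G ≤ 2 * irNum G - 1 :=
  domNum_irNum_bounds_general G ⟨Finset.univ, fun v hv ↦ absurd (Finset.mem_univ v) hv⟩
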